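/- arXiv:2401.00837 — 2 statements merged into one kernel-verified Lean document; each statement's English description precedes it below -/
import Mathlib

section
/- For the unweighted two-dimensional step set S = {(0,1), (0,-1), (1,0), (-1,0)} (the four cardinal directions), the number s_n of walks of length n taking steps in S, starting at the origin, and remaining in ℕ^2 satisfies s_n ∼ (4/π) · 4^n / n as n → ∞. -/
open Finset Filter
open scoped Classical Real

noncomputable section

/-- The number of walks of length `n` with steps in `S`, starting at the origin and
never leaving `ℕ^d` (all partial sums have nonnegative coordinates). -/
def numWalks (d : ℕ) (S : Finset (Fin d → ℤ)) (n : ℕ) : ℕ :=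
  Finset.card (Finset.univ.filter fun f : Fin n → {i // i ∈ S} =>
    ∀ m : ℕ, m ≤ n → ∀ j : Fin d,
      0 ≤ ∑ k ∈ Finset.univ.filter (fun k : Fin n => (k : ℕ) < m), ((f k : Fin d → ℤ) j))

/-- Total weight of walks of length `n` with steps in `S` (weighted by `w`),
starting at the origin and never leaving `ℕ^d`. -/
def walkWeight (d : ℕ) (S : Finset (Fin d → ℤ)) (w : (Fin d → ℤ) → ℝ) (n : ℕ) : ℝ :=
  ∑ f : Fin n → {i // i ∈ S},
    if ∀ m : ℕ, m ≤ n → ∀ j : Fin d,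
        0 ≤ ∑ k ∈ Finset.univ.filter (fun k : Fin n => (k : ℕ) < m), ((f k : Fin d → ℤ) j)
    then ∏ k : Fin n, w (f k) else 0

/-!
If a step set in `{-1, 0, 1} ^ d` is invariant under the coordinate reflections, then summing
`∏ j, sign (p j + 1 + X j)` over the endpoints `X` of all unrestricted walks counts the walks from
`p` that stay in `ℕ ^ d`: both quantities satisfy the same recursion in the length, and both vanish
when some `p j = -1`, the sum because it is then odd under reflecting coordinate `j`. At `p = 0` the
even part of `x ↦ sign (x + 1)` is that of the indicator of `{0, 1}`, so the walks staying in
`ℕ ^ d` are as many as the unrestricted walks ending in `{0, 1} ^ d`.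

For the four cardinal directions the rotated coordinates `X 0 + X 1` and `X 0 - X 1` perform two
independent simple walks, and the count factors as
`n.choose (n / 2) * (n + 1).choose ((n + 1) / 2)`. Its asymptotics are those of the central binomial
coefficients, which come from the Wallis product.
-/

section Reflection

variable {d n : ℕ} {S : Finset (Fin d → ℤ)}

/-- Unrestricted walks of length `n`, encoded by their sequence of steps in `S`. -/
abbrev Walk (S : Finset (Fin d → ℤ)) (n : ℕ) : Type := Fin n → {i // i ∈ S}

/-- The total displacement of a walk, which is its endpoint when it starts at the origin. -/
def endpoint (f : Walk S n) (j : Fin d) : ℤ := ∑ k, (f k : Fin d → ℤ) j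

/-- The walk `f` started at `p` never leaves `ℕ ^ d`. -/
def StaysNonneg (p : Fin d → ℤ) (f : Walk S n) : Prop :=
  ∀ m : ℕ, m ≤ n → ∀ j : Fin d,
    0 ≤ p j + ∑ k ∈ univ.filter (fun k : Fin n => (k : ℕ) < m), (f k : Fin d → ℤ) j

/-- The number of walks of length `n` with steps in `S` which start at `p` and never leave `ℕ ^ d`;
the starting point is free because the recursion in `n` moves it. -/
def numWalksFrom (S : Finset (Fin d → ℤ)) (p : Fin d → ℤ) (n : ℕ) : ℕ :=
  #{f : Walk S n | StaysNonneg p f}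

/-- Invariance of a step set under the reflections in the coordinate hyperplanes. -/
def IsReflectionInvariant (S : Finset (Fin d → ℤ)) : Prop :=
  ∀ s ∈ S, ∀ j, Function.update s j (-s j) ∈ S

lemma numWalks_eq_numWalksFrom_zero (S : Finset (Fin d → ℤ)) (n : ℕ) :
    numWalks d S n = numWalksFrom S 0 n := by
  simp only [numWalks, numWalksFrom, StaysNonneg, Pi.zero_apply, zero_add]

lemma sum_walk_succ {M : Type*} [AddCommMonoid M] (g : Walk S (n + 1) → M) :
    ∑ f, g f = ∑ s : {i // i ∈ S}, ∑ f : Walk S n, g (Fin.cons s f) := by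
  rw [← (Fin.consEquiv fun _ => {i // i ∈ S}).sum_comp, Fintype.sum_prod_type]
  rfl

lemma endpoint_cons (s : {i // i ∈ S}) (f : Walk S n) (j : Fin d) :
    endpoint (Fin.cons s f : Walk S (n + 1)) j = s.1 j + endpoint f j := by
  simp [endpoint, Fin.sum_univ_succ]

lemma staysNonneg_cons (p : Fin d → ℤ) (s : {i // i ∈ S}) (f : Walk S n) :
    StaysNonneg p (Fin.cons s f : Walk S (n + 1)) ↔
      (∀ j, 0 ≤ p j) ∧ StaysNonneg (p + s.1) f := by
  have partialSum_succ (m : ℕ) (j : Fin d) :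
      p j + ∑ k ∈ univ.filter (fun k : Fin (n + 1) => (k : ℕ) < m + 1),
        ((Fin.cons s f : Walk S (n + 1)) k : Fin d → ℤ) j =
      (p + s.1) j + ∑ k ∈ univ.filter (fun k : Fin n => (k : ℕ) < m), (f k : Fin d → ℤ) j := by
    simp [Finset.sum_filter, Fin.sum_univ_succ, add_assoc]
  constructor
  · intro h
    refine ⟨fun j => by simpa using h 0 (Nat.zero_le _) j, fun m hm j => ?_⟩
    rw [← partialSum_succ]
    exact h (m + 1) (Nat.succ_le_succ hm) j
  · rintro ⟨hp, h⟩ (_ | m) hm j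
    · simpa using hp j
    · rw [partialSum_succ]
      exact h m (Nat.le_of_succ_le_succ hm) j

lemma numWalksFrom_zero_right {p : Fin d → ℤ} (hp : ∀ j, 0 ≤ p j) : numWalksFrom S p 0 = 1 := by
  simp [numWalksFrom, StaysNonneg, hp]

lemma numWalksFrom_succ {p : Fin d → ℤ} (hp : ∀ j, 0 ≤ p j) (n : ℕ) :
    numWalksFrom S p (n + 1) = ∑ s : {i // i ∈ S}, numWalksFrom S (p + s.1) n := by
  simp only [numWalksFrom, card_filter, sum_walk_succ, staysNonneg_cons, hp, implies_true, true_and]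

lemma numWalksFrom_eq_zero_of_neg {p : Fin d → ℤ} {j : Fin d} (hp : p j < 0) (n : ℕ) :
    numWalksFrom S p n = 0 :=
  card_eq_zero.2 <| filter_eq_empty_iff.2 fun _ _ h =>
    hp.not_ge <| by simpa using h 0 (Nat.zero_le _) j

lemma odd_sign_one_add_sub_indicator :
    ((fun x : ℤ => (1 + x).sign) - fun x => if x = 0 ∨ x = 1 then 1 else 0).Odd := by
  intro x
  simp only [Pi.sub_apply]
  obtain hx | rfl | rfl | rfl | hx : x ≤ -2 ∨ x = -1 ∨ x = 0 ∨ x = 1 ∨ 2 ≤ x := by omega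
  · rw [Int.sign_eq_one_of_pos (by omega), Int.sign_eq_neg_one_of_neg (by omega)]
    split_ifs <;> omega
  · decide
  · decide
  · decide
  · rw [Int.sign_eq_neg_one_of_neg (by omega), Int.sign_eq_one_of_pos (by omega)]
    split_ifs <;> omega

namespace IsReflectionInvariant

/-- The involution of the set of walks which reflects every step in coordinate `j`. -/
def reflectWalk (hS : IsReflectionInvariant S) (n : ℕ) (j : Fin d) : Equiv.Perm (Walk S n) :=
  Function.Involutive.toPerm
    (fun f k => ⟨Function.update (f k).1 j (-(f k).1 j), hS _ (f k).2 j⟩)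
    fun f => by ext; simp

lemma reflectWalk_apply (hS : IsReflectionInvariant S) (j : Fin d) (f : Walk S n) (k : Fin n) :
    (hS.reflectWalk n j f k : Fin d → ℤ) = Function.update (f k).1 j (-(f k).1 j) :=
  rfl

lemma endpoint_reflectWalk_self (hS : IsReflectionInvariant S) (j : Fin d) (f : Walk S n) :
    endpoint (hS.reflectWalk n j f) j = -endpoint f j := by
  simp [endpoint, reflectWalk_apply]

lemma endpoint_reflectWalk_of_ne (hS : IsReflectionInvariant S) {i j : Fin d} (hij : i ≠ j)
    (f : Walk S n) : endpoint (hS.reflectWalk n j f) i = endpoint f i := by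
  simp [endpoint, reflectWalk_apply, hij]

lemma sum_prod_endpoint_eq_zero (hS : IsReflectionInvariant S) {φ : Fin d → ℤ → ℤ} {j : Fin d}
    (hφ : (φ j).Odd) : ∑ f : Walk S n, ∏ i, φ i (endpoint f i) = 0 := by
  have reflect_eq_neg (f : Walk S n) :
      ∏ i, φ i (endpoint (hS.reflectWalk n j f) i) = -∏ i, φ i (endpoint f i) := by
    rw [← mul_prod_erase univ _ (mem_univ j), ← mul_prod_erase univ _ (mem_univ j),
      hS.endpoint_reflectWalk_self, hφ, neg_mul]
    congr 2
    exact prod_congr rfl fun i hi => by rw [hS.endpoint_reflectWalk_of_ne (ne_of_mem_erase hi)]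
  have sum_eq_neg := Equiv.sum_comp (hS.reflectWalk n j) fun f => ∏ i, φ i (endpoint f i)
  simp only [reflect_eq_neg, sum_neg_distrib] at sum_eq_neg
  exact self_eq_neg.1 sum_eq_neg.symm

lemma sum_prod_endpoint_update (hS : IsReflectionInvariant S) (φ : Fin d → ℤ → ℤ) {j : Fin d}
    {ψ : ℤ → ℤ} (h : (ψ - φ j).Odd) :
    ∑ f : Walk S n, ∏ i, Function.update φ j ψ i (endpoint f i) =
      ∑ f : Walk S n, ∏ i, φ i (endpoint f i) := by
  rw [← sub_eq_zero, ← sum_sub_distrib,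
    ← hS.sum_prod_endpoint_eq_zero (n := n) (φ := Function.update φ j (ψ - φ j)) (j := j)
      (by simpa)]
  refine sum_congr rfl fun f _ => ?_
  have prod_update (χ : ℤ → ℤ) : ∏ i, Function.update φ j χ i (endpoint f i) =
      χ (endpoint f j) * ∏ i ∈ univ.erase j, φ i (endpoint f i) := by
    rw [← mul_prod_erase univ _ (mem_univ j), Function.update_self]
    congr 1
    exact prod_congr rfl fun i hi => by rw [Function.update_of_ne (ne_of_mem_erase hi)]
  rw [prod_update, prod_update, ← mul_prod_erase univ _ (mem_univ j), Pi.sub_apply, sub_mul]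

lemma sum_prod_endpoint_congr (hS : IsReflectionInvariant S) {φ ψ : Fin d → ℤ → ℤ}
    (h : ∀ j, (ψ j - φ j).Odd) :
    ∑ f : Walk S n, ∏ i, ψ i (endpoint f i) = ∑ f : Walk S n, ∏ i, φ i (endpoint f i) := by
  suffices ∀ J : Finset (Fin d), ∑ f : Walk S n, ∏ i, J.piecewise ψ φ i (endpoint f i) =
      ∑ f : Walk S n, ∏ i, φ i (endpoint f i) by simpa using this univ
  intro J
  induction J using Finset.induction_on with
  | empty => simp
  | insert j J hj ih =>
    rw [piecewise_insert, hS.sum_prod_endpoint_update _ (by simpa [hj] using h j), ih]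

lemma sum_prod_sign_eq_zero (hS : IsReflectionInvariant S) {p : Fin d → ℤ} {j : Fin d}
    (hp : p j = -1) : ∑ f : Walk S n, ∏ i, (p i + 1 + endpoint f i).sign = 0 :=
  hS.sum_prod_endpoint_eq_zero (φ := fun i x => (p i + 1 + x).sign) (j := j) fun x => by
    simp [hp, Int.sign_neg]

theorem numWalksFrom_eq_sum_sign (hS : IsReflectionInvariant S) (hS' : ∀ s ∈ S, ∀ j, -1 ≤ s j)
    (n : ℕ) {p : Fin d → ℤ} (hp : ∀ j, -1 ≤ p j) :
    (numWalksFrom S p n : ℤ) = ∑ f : Walk S n, ∏ j, (p j + 1 + endpoint f j).sign := by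
  by_cases wall : ∃ j, p j = -1
  · obtain ⟨j, hj⟩ := wall
    rw [hS.sum_prod_sign_eq_zero hj, numWalksFrom_eq_zero_of_neg (j := j) (by omega), Nat.cast_zero]
  have interior (j : Fin d) : 0 ≤ p j := by
    have := hp j
    have := not_exists.1 wall j
    omega
  cases n with
  | zero => simp [numWalksFrom_zero_right interior, endpoint, Int.sign_eq_one_of_pos, interior]
  | succ n =>
    have step (s : {i // i ∈ S}) := hS.numWalksFrom_eq_sum_sign hS' n (p := p + s.1) fun j => by
      have := hS' s s.2 j
      have := interior j
      simp only [Pi.add_apply]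
      omega
    rw [numWalksFrom_succ interior, sum_walk_succ, Nat.cast_sum]
    simp only [step, endpoint_cons, Pi.add_apply, add_assoc, add_left_comm (1 : ℤ)]

theorem numWalks_eq_card_endpoint (hS : IsReflectionInvariant S) (hS' : ∀ s ∈ S, ∀ j, -1 ≤ s j)
    (n : ℕ) :
    numWalks d S n = #{f : Walk S n | ∀ j, endpoint f j = 0 ∨ endpoint f j = 1} := by
  zify
  calc (numWalks d S n : ℤ)
    _ = ∑ f : Walk S n, ∏ j, (1 + endpoint f j).sign := by
        rw [numWalks_eq_numWalksFrom_zero, hS.numWalksFrom_eq_sum_sign hS' n fun _ => by simp]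
        simp only [Pi.zero_apply, zero_add]
    _ = ∑ f : Walk S n, ∏ j, if endpoint f j = 0 ∨ endpoint f j = 1 then 1 else 0 :=
        hS.sum_prod_endpoint_congr fun _ => odd_sign_one_add_sub_indicator
    _ = #{f : Walk S n | ∀ j, endpoint f j = 0 ∨ endpoint f j = 1} := by
        simp only [prod_ite_zero, mem_univ, forall_const, prod_const_one, sum_boole]

end IsReflectionInvariant

end Reflection

section FinsetPairs

variable {α : Type*} [Fintype α]

lemma card_filter_card_eq_or_eq_succ (k : ℕ) :
    #{A : Finset α | #A = k ∨ #A = k + 1} = (Fintype.card α + 1).choose (k + 1) := by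
  have disjoint : Disjoint (univ.filter fun A : Finset α => #A = k)
      (univ.filter fun A : Finset α => #A = k + 1) :=
    disjoint_filter.2 fun _ _ h => by omega
  rw [filter_or, card_union_of_disjoint disjoint, univ_filter_card_eq, univ_filter_card_eq,
    card_powersetCard, card_powersetCard, card_univ, Nat.choose_succ_succ]

/-- The pairs of finsets which encode the walks of length `Fintype.card α` ending in `{0, 1} ^ 2`:
both `#A.1 + #A.2 - Fintype.card α` and `#A.1 - #A.2` belong to `{0, 1}`, stated here without
subtraction. -/
def balancedPairs (α : Type*) [Fintype α] : Finset (Finset α × Finset α) :=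
  univ.filter fun A =>
    (#A.1 + #A.2 = Fintype.card α ∨ #A.1 + #A.2 = Fintype.card α + 1) ∧
      (#A.1 = #A.2 ∨ #A.1 = #A.2 + 1)

lemma balancedPairs_of_card_even {m : ℕ} (hα : Fintype.card α = 2 * m) :
    balancedPairs α =
      (univ.filter fun A => #A = m ∨ #A = m + 1) ×ˢ (univ.filter fun A => #A = m) := by
  ext A
  simp only [balancedPairs, mem_filter_univ, mem_product]
  omega

lemma balancedPairs_of_card_odd {m : ℕ} (hα : Fintype.card α = 2 * m + 1) :
    balancedPairs α =
      (univ.filter fun A => #A = m + 1) ×ˢ (univ.filter fun A => #A = m ∨ #A = m + 1) := by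
  ext A
  simp only [balancedPairs, mem_filter_univ, mem_product]
  omega

lemma card_balancedPairs {n : ℕ} (hα : Fintype.card α = n) :
    #(balancedPairs α) = n.choose (n / 2) * (n + 1).choose ((n + 1) / 2) := by
  obtain ⟨m, rfl | rfl⟩ := n.even_or_odd'
  · have half : 2 * m / 2 = m := by omega
    have half_succ : (2 * m + 1) / 2 = m := by omega
    rw [balancedPairs_of_card_even hα, card_product, card_filter_card_eq_or_eq_succ,
      univ_filter_card_eq, card_powersetCard, card_univ, hα, half, half_succ,
      Nat.choose_symm_half, mul_comm]
  · have half : (2 * m + 1) / 2 = m := by omega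
    have half_succ : (2 * m + 1 + 1) / 2 = m + 1 := by omega
    rw [balancedPairs_of_card_odd hα, card_product, card_filter_card_eq_or_eq_succ,
      univ_filter_card_eq, card_powersetCard, card_univ, hα, half, half_succ,
      Nat.choose_symm_half]

end FinsetPairs

section CardinalDirections

variable {n : ℕ}

/-- The four unit steps of the square lattice. -/
abbrev cardinalSteps : Finset (Fin 2 → ℤ) := {![0, 1], ![0, -1], ![1, 0], ![-1, 0]}

lemma isReflectionInvariant_cardinalSteps : IsReflectionInvariant cardinalSteps := by
  unfold IsReflectionInvariant
  decide

/-- The sets of times at which a walk increases the rotated coordinates `x + y` and `x - y`. -/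
def diagonalAscents (f : Walk cardinalSteps n) : Finset (Fin n) × Finset (Fin n) :=
  (univ.filter fun k => 0 < (f k).1 0 + (f k).1 1,
    univ.filter fun k => 0 < (f k).1 0 - (f k).1 1)

lemma diagonalAscents_bijective :
    Function.Bijective (diagonalAscents : Walk cardinalSteps n → _) := by
  have step_ext : ∀ s ∈ cardinalSteps, ∀ t ∈ cardinalSteps, (0 < s 0 + s 1 ↔ 0 < t 0 + t 1) →
      (0 < s 0 - s 1 ↔ 0 < t 0 - t 1) → s = t := by decide
  refine (Fintype.bijective_iff_injective_and_card _).2 ⟨fun f g hfg => funext fun k => ?_, ?_⟩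
  · simp only [diagonalAscents, Prod.mk.injEq, Finset.ext_iff, mem_filter_univ] at hfg
    exact Subtype.ext (step_ext _ (f k).2 _ (g k).2 (hfg.1 k) (hfg.2 k))
  · have card_steps : #cardinalSteps = 2 * 2 := by decide
    rw [Fintype.card_fun, Fintype.card_coe, card_steps, Fintype.card_prod, Fintype.card_finset,
      Fintype.card_fin, mul_pow]

lemma sum_eq_two_mul_card_pos_sub_card {ι : Type*} [Fintype ι] {x : ι → ℤ}
    (hx : ∀ k, x k = 1 ∨ x k = -1) :
    ∑ k, x k = 2 * #{k | 0 < x k} - Fintype.card ι := by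
  calc ∑ k, x k
    _ = ∑ k, (2 * (if 0 < x k then 1 else 0) - 1) :=
        sum_congr rfl fun k _ => by rcases hx k with h | h <;> simp [h]
    _ = 2 * #{k | 0 < x k} - Fintype.card ι := by
        rw [sum_sub_distrib, ← mul_sum, sum_boole, sum_const, nsmul_one, card_univ]

lemma endpoint_add_endpoint (f : Walk cardinalSteps n) :
    endpoint f 0 + endpoint f 1 = 2 * #(diagonalAscents f).1 - n := by
  have step : ∀ s ∈ cardinalSteps, s 0 + s 1 = 1 ∨ s 0 + s 1 = -1 := by decide
  rw [endpoint, endpoint, ← sum_add_distrib,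
    sum_eq_two_mul_card_pos_sub_card fun k => step _ (f k).2, Fintype.card_fin, diagonalAscents]

lemma endpoint_sub_endpoint (f : Walk cardinalSteps n) :
    endpoint f 0 - endpoint f 1 = 2 * #(diagonalAscents f).2 - n := by
  have step : ∀ s ∈ cardinalSteps, s 0 - s 1 = 1 ∨ s 0 - s 1 = -1 := by decide
  rw [endpoint, endpoint, ← sum_sub_distrib,
    sum_eq_two_mul_card_pos_sub_card fun k => step _ (f k).2, Fintype.card_fin, diagonalAscents]

lemma forall_endpoint_iff (f : Walk cardinalSteps n) :
    (∀ j, endpoint f j = 0 ∨ endpoint f j = 1) ↔ diagonalAscents f ∈ balancedPairs (Fin n) := by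
  have hadd := endpoint_add_endpoint f
  have hsub := endpoint_sub_endpoint f
  rw [Fin.forall_fin_two, balancedPairs, mem_filter_univ, Fintype.card_fin]
  omega

theorem numWalks_cardinalSteps (n : ℕ) :
    numWalks 2 cardinalSteps n = n.choose (n / 2) * (n + 1).choose ((n + 1) / 2) := by
  rw [isReflectionInvariant_cardinalSteps.numWalks_eq_card_endpoint (by decide),
    ← card_balancedPairs (Fintype.card_fin n)]
  exact card_bijective diagonalAscents diagonalAscents_bijective fun f => by
    rw [mem_filter_univ, forall_endpoint_iff]

end CardinalDirections

section Asymptotics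

lemma tendsto_atTop_of_even_of_odd {α : Type*} {u : ℕ → α} {l : Filter α}
    (heven : Tendsto (fun m => u (2 * m)) atTop l)
    (hodd : Tendsto (fun m => u (2 * m + 1)) atTop l) : Tendsto u atTop l := by
  intro s hs
  obtain ⟨M, hM⟩ := eventually_atTop.1 (heven.eventually_mem hs)
  obtain ⟨N, hN⟩ := eventually_atTop.1 (hodd.eventually_mem hs)
  refine mem_atTop_sets.2 ⟨2 * M + 2 * N + 1, fun n hn => ?_⟩
  obtain ⟨m, rfl | rfl⟩ := n.even_or_odd'
  · exact hM m (by omega)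
  · exact hN m (by omega)

lemma centralBinom_succ_eq_two_mul_choose (m : ℕ) :
    (m + 1).centralBinom = 2 * (2 * m + 1).choose m := by
  rw [Nat.centralBinom, mul_add_one, Nat.choose_succ_succ, Nat.choose_symm_half, ← two_mul]

lemma tendsto_centralBinom_sq_div :
    Tendsto (fun m : ℕ => (m.centralBinom : ℝ) ^ 2 * (2 * m + 1) / 16 ^ m)
      atTop (nhds (2 / π)) := by
  have wallis := Real.Wallis.tendsto_W_nhds_pi_div_two.inv₀ (by positivity)
  rw [inv_div] at wallis
  refine wallis.congr fun m => ?_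
  have centralBinom_eq : (m.centralBinom : ℝ) = (2 * m).factorial / m.factorial ^ 2 := by
    rw [Nat.centralBinom, Nat.cast_choose ℝ (by omega), two_mul, Nat.add_sub_cancel, sq]
  have two_pow_eq : (2 : ℝ) ^ (4 * m) = 16 ^ m := by rw [pow_mul]; norm_num
  rw [Real.Wallis.W_eq_factorial_ratio, centralBinom_eq, two_pow_eq]
  field_simp

lemma tendsto_choose_half_sq_div :
    Tendsto (fun n : ℕ => (n.choose (n / 2) : ℝ) ^ 2 * n / 4 ^ n) atTop (nhds (2 / π)) := by
  have tendsto_ratio (b d : ℝ) :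
      Tendsto (fun m : ℕ => (2 * m + b) / (2 * m + d)) atTop (nhds 1) := by
    simpa [add_comm] using tendsto_add_mul_div_add_mul_atTop_nhds b d 2 (two_ne_zero (α := ℝ))
  have four_pow_eq (m : ℕ) : (4 : ℝ) ^ (2 * m) = 16 ^ m := by rw [pow_mul]; norm_num
  refine tendsto_atTop_of_even_of_odd ?_ ?_
  · have h := tendsto_centralBinom_sq_div.mul (tendsto_ratio 0 1)
    rw [mul_one] at h
    refine h.congr fun m => ?_
    rw [Nat.mul_div_cancel_left m two_pos, ← Nat.centralBinom, four_pow_eq]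
    push_cast
    field_simp
    ring
  · have h := (tendsto_centralBinom_sq_div.comp (tendsto_add_atTop_nat 1)).mul (tendsto_ratio 1 3)
    rw [mul_one] at h
    refine h.congr fun m => ?_
    have half : (2 * m + 1) / 2 = m := by omega
    rw [half, Function.comp_apply, centralBinom_succ_eq_two_mul_choose, pow_succ (16 : ℝ),
      pow_succ (4 : ℝ), four_pow_eq]
    push_cast
    field_simp
    ring

lemma tendsto_choose_half_mul_choose_half_succ_div :
    Tendsto (fun n : ℕ => ((n.choose (n / 2) * (n + 1).choose ((n + 1) / 2) : ℕ) : ℝ) /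
      ((4 / π) * 4 ^ n / n)) atTop (nhds 1) := by
  have ratio_sq := ((tendsto_choose_half_sq_div.mul
    (tendsto_choose_half_sq_div.comp (tendsto_add_atTop_nat 1))).mul
    (tendsto_natCast_div_add_atTop (1 : ℝ))).mul_const (π ^ 2 / 4)
  have limit_eq : 2 / π * (2 / π) * 1 * (π ^ 2 / 4) = 1 := by field_simp; norm_num
  rw [limit_eq] at ratio_sq
  have ratio := ratio_sq.sqrt
  rw [Real.sqrt_one] at ratio
  refine ratio.congr fun n => ?_
  rw [← Real.sqrt_sq (by positivity : (0 : ℝ) ≤ _ / ((4 / π) * 4 ^ n / n))]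
  congr 1
  simp only [Function.comp_apply]
  push_cast
  field_simp
  ring

end Asymptotics

/-- For the four cardinal directions in `ℤ²`, the number of quarter-plane walks
satisfies `s_n ∼ (4/π)·4^n/n`. -/
theorem cardinal_directions_asymptotics :
    Tendsto (fun n : ℕ =>
      (numWalks 2 ({![0, 1], ![0, -1], ![1, 0], ![-1, 0]} : Finset (Fin 2 → ℤ)) n : ℝ) /
        ((4 / π) * 4 ^ n / n))
      atTop (nhds 1) := by
  simpa only [numWalks_cardinalSteps] using tendsto_choose_half_mul_choose_half_succ_div

end
end

section
/- For the weighted two-dimensional step set S = {(0,1), (1,-1), (-1,-1)} in which the step (0,1) carries weight 2 and the steps (1,-1), (-1,-1) carry weight 1, the total weight s_n of walks of length n taking steps in S, starting at the origin, and remaining in ℕ^2 satisfies s_n = (4^n / n) · ( 2√2/π + n^{-1/2}/√π + O(1/n) ) as n → ∞. In particular s_n ∼ (2√2/π) · 4^n / n. -/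
open Finset Filter
open scoped Classical Real

noncomputable section

/-!
Record a walk by its vertical and its horizontal part. With `k` downward steps, the vertical part is
a nonnegative `±1` path of length `n` with `k` steps `-1`, and the horizontal part is an independent
nonnegative `±1` path of length `k`. The vertical paths are counted by the ballot numbers
`C(n, k) - C(n, k - 1)` and there are `C(k, ⌊k/2⌋) = 2 ^ k * p k` horizontal ones, so
`s_n = 2 ^ n * ∑ k ≤ n / 2, (C(n, k) - C(n, k - 1)) * p k`. Summation by parts gives
`s_n / 4 ^ n = p ⌊n/2⌋ * p n + ∑ k < ⌊n/2⌋, (p k - p (k + 1)) * C(n, k) / 2 ^ n`.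

By Wallis' product `p k` is close to `√(2 / (π * k))`, so the first term produces
`2 * √2 / (π * n)`. The difference `p k - p (k + 1)` vanishes for odd `k` and is `p k / (k + 2)` for
even `k`. The binomial weights concentrate near `k = n / 2`, where this is about
`4 / (√π * n ^ (3 / 2))`, and the even `k < n / 2` carry about a quarter of the binomial mass, so
the sum produces `1 / (√π * n ^ (3 / 2))`.
-/

/-! ### Walks in an orthant -/

/-- A sequence of steps all of whose partial sums, from the empty one on, lie in the nonnegative
orthant: the condition that `walkWeight` imposes on walks. -/
def StaysInOrthant {d n : ℕ} (f : Fin n → Fin d → ℤ) : Prop :=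
  ∀ m ≤ n, 0 ≤ ∑ k ∈ univ.filter (fun k : Fin n => (k : ℕ) < m), f k

/-- The transfer operator of walks in the orthant: `stepOperator S w φ x` sums `φ` over the
positions reachable from `x` by one step, with the weight of that step. Steps leaving the orthant
are dropped. -/
def stepOperator {d : ℕ} (S : Finset (Fin d → ℤ)) (w φ : (Fin d → ℤ) → ℝ) (x : Fin d → ℤ) : ℝ :=
  ∑ s ∈ S, if 0 ≤ x + s then w s * φ (x + s) else 0

section Orthant

variable {d : ℕ}

lemma staysInOrthant_snoc {n : ℕ} (f : Fin n → Fin d → ℤ) (s : Fin d → ℤ) :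
    StaysInOrthant (Fin.snoc f s : Fin (n + 1) → Fin d → ℤ) ↔
      StaysInOrthant f ∧ 0 ≤ ∑ k, f k + s := by
  have sum_snoc (m : ℕ) :
      ∑ k ∈ univ.filter (fun k : Fin (n + 1) => (k : ℕ) < m),
          (Fin.snoc f s : Fin (n + 1) → Fin d → ℤ) k =
        ∑ k ∈ univ.filter (fun k : Fin n => (k : ℕ) < m), f k + if n < m then s else 0 := by
    simp [sum_filter, Fin.sum_univ_castSucc]
  have full_sum : ∑ k ∈ univ.filter (fun k : Fin n => (k : ℕ) < n + 1), f k = ∑ k, f k := by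
    rw [filter_true_of_mem fun k _ => by omega]
  simp only [StaysInOrthant, sum_snoc]
  constructor
  · intro h
    refine ⟨fun m hm => ?_, ?_⟩
    · simpa [hm.not_gt] using h m (by omega)
    · simpa [full_sum] using h (n + 1) le_rfl
  · rintro ⟨hf, hs⟩ m hm
    rcases Nat.le_or_eq_of_le_succ hm with hm | rfl
    · simpa [hm.not_gt] using hf m hm
    · simpa [full_sum] using hs

theorem sum_walks_eq_stepOperator_iterate (S : Finset (Fin d → ℤ)) (w : (Fin d → ℤ) → ℝ) (n : ℕ)
    (φ : (Fin d → ℤ) → ℝ) :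
    ∑ f : Fin n → {i // i ∈ S}, (if StaysInOrthant (fun k => (f k : Fin d → ℤ)) then
      (∏ k, w (f k)) * φ (∑ k, (f k : Fin d → ℤ)) else 0) = (stepOperator S w)^[n] φ 0 := by
  induction n generalizing φ with
  | zero => simp [StaysInOrthant]
  | succ n ih =>
    rw [Function.iterate_succ_apply, ← ih, ← (Fin.snocEquiv fun _ => {i // i ∈ S}).sum_comp,
      Fintype.sum_prod_type_right]
    refine sum_congr rfl fun f _ => ?_
    have coe_snoc (s : {i // i ∈ S}) :
        (fun k => ((Fin.snocEquiv fun _ => {i // i ∈ S}) (s, f) k : Fin d → ℤ)) =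
          Fin.snoc (fun k => (f k : Fin d → ℤ)) (s : Fin d → ℤ) :=
      Fin.comp_snoc Subtype.val f s
    have prod_snoc (s : {i // i ∈ S}) :
        ∏ k, w ((Fin.snocEquiv fun _ => {i // i ∈ S}) (s, f) k) = (∏ k, w (f k)) * w s := by
      simp [Fin.snocEquiv, Fin.prod_univ_castSucc]
    simp only [prod_snoc, coe_snoc, staysInOrthant_snoc, stepOperator, ← sum_coe_sort S,
      mul_sum]
    by_cases hf : StaysInOrthant fun k => (f k : Fin d → ℤ) <;> simp [hf, mul_assoc]

theorem walkWeight_eq_stepOperator_iterate (S : Finset (Fin d → ℤ)) (w : (Fin d → ℤ) → ℝ) (n : ℕ) :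
    walkWeight d S w n = (stepOperator S w)^[n] 1 0 := by
  rw [← sum_walks_eq_stepOperator_iterate]
  simp [walkWeight, StaysInOrthant, Pi.le_def]

end Orthant

/-! ### Ballot paths -/

/-- For `2 * k ≤ n`, the number of sequences of `n` steps `±1` with exactly `k` steps `-1` and all
partial sums nonnegative, as a real number. For larger `k` the value has no such meaning. -/
def ballotNumber (n : ℕ) : ℕ → ℝ
  | 0 => 1
  | k + 1 => n.choose (k + 1) - n.choose k

/-- The sum of `ψ k` over all nonnegative `±1` paths of length `n`, where `k` is the number of steps
`-1` of the path. -/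
def ballotSum (n : ℕ) (ψ : ℕ → ℝ) : ℝ :=
  ∑ k ∈ range (n / 2 + 1), ballotNumber n k * ψ k

lemma ballotNumber_succ_succ (n k : ℕ) :
    ballotNumber (n + 1) (k + 1) = ballotNumber n (k + 1) + ballotNumber n k := by
  cases k <;> simp only [ballotNumber, Nat.choose_succ_succ', Nat.choose_zero_right] <;>
    push_cast <;> ring

lemma ballotNumber_two_mul_add_one (m : ℕ) : ballotNumber (2 * m + 1) (m + 1) = 0 := by
  simp [ballotNumber, Nat.choose_symm_half]

lemma sum_range_ballotNumber (n m : ℕ) :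
    ∑ k ∈ range (m + 1), ballotNumber n k = n.choose m := by
  induction m with
  | zero => simp [ballotNumber]
  | succ m ih => rw [sum_range_succ, ih, ballotNumber, add_sub_cancel]

lemma sum_range_ballotNumber_mul (n m : ℕ) (ψ : ℕ → ℝ) :
    ∑ k ∈ range (m + 1), ballotNumber n k * ψ k =
      ψ m * n.choose m + ∑ k ∈ range m, (ψ k - ψ (k + 1)) * n.choose k := by
  have by_parts := sum_range_by_parts ψ (ballotNumber n) (m + 1)
  simp only [smul_eq_mul, Nat.add_sub_cancel, sum_range_ballotNumber] at by_parts
  simp only [mul_comm (ballotNumber n _), by_parts, ← neg_sub (ψ (_ + 1)), neg_mul, sum_neg_distrib,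
    sub_eq_add_neg (_ * _)]

lemma ballotSum_one (n : ℕ) : ballotSum n 1 = n.choose (n / 2) := by
  simp [ballotSum, sum_range_ballotNumber]

lemma ballotSum_congr {n : ℕ} {ψ χ : ℕ → ℝ} (h : ∀ k, 2 * k ≤ n → ψ k = χ k) :
    ballotSum n ψ = ballotSum n χ :=
  sum_congr rfl fun k hk => by rw [h k (by grind)]

lemma ballotSum_add (n : ℕ) (ψ χ : ℕ → ℝ) :
    ballotSum n (fun k => ψ k + χ k) = ballotSum n ψ + ballotSum n χ := by
  simp [ballotSum, mul_add, sum_add_distrib]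

lemma mul_ballotSum (c : ℝ) (n : ℕ) (ψ : ℕ → ℝ) :
    c * ballotSum n ψ = ballotSum n fun k => c * ψ k := by
  simp [ballotSum, mul_sum, mul_left_comm]

lemma sum_range_ballotNumber_succ_mul (n m : ℕ) (ψ : ℕ → ℝ) :
    ∑ k ∈ range (m + 1), ballotNumber (n + 1) k * ψ k =
      ∑ k ∈ range (m + 1), ballotNumber n k * ψ k +
        ∑ k ∈ range m, ballotNumber n k * ψ (k + 1) := by
  have zeroth (n : ℕ) : ballotNumber n 0 = 1 := rfl
  simp only [sum_range_succ' _ m, ballotNumber_succ_succ, add_mul, sum_add_distrib, zeroth]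
  ring

/-- A path of length `n` extends by a step `+1` always, by a step `-1` unless it ends at `0`. -/
theorem ballotSum_succ (n : ℕ) (ψ : ℕ → ℝ) :
    ballotSum (n + 1) ψ = ballotSum n fun k => ψ k + if 2 * k < n then ψ (k + 1) else 0 := by
  rw [ballotSum, sum_range_ballotNumber_succ_mul]
  simp only [ballotSum, mul_add, sum_add_distrib]
  rcases Nat.even_or_odd' n with ⟨m, rfl | rfl⟩
  · rw [show (2 * m + 1) / 2 = m by omega, show 2 * m / 2 = m by omega, sum_range_succ _ m,
      sum_range_succ _ m]
    have below : ∀ k ∈ range m, ballotNumber (2 * m) k * (if 2 * k < 2 * m then ψ (k + 1) else 0) =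
        ballotNumber (2 * m) k * ψ (k + 1) := fun k hk => by
      rw [if_pos (by grind)]
    rw [sum_congr rfl below]
    simp
  · rw [show (2 * m + 1 + 1) / 2 = m + 1 by omega, show (2 * m + 1) / 2 = m by omega,
      sum_range_succ _ (m + 1), ballotNumber_two_mul_add_one, zero_mul, add_zero]
    congr 1
    refine sum_congr rfl fun k hk => ?_
    rw [if_pos (by grind)]

/-! ### The step set of the example -/

/-- The steps `(0,1)`, `(1,-1)`, `(-1,-1)`. -/
abbrev exampleSteps : Finset (Fin 2 → ℤ) := {![0, 1], ![1, -1], ![-1, -1]}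

/-- The weights on `exampleSteps` giving `(0,1)` the weight `u` and the other two steps `1`. -/
abbrev exampleWeight (u : ℝ) : (Fin 2 → ℤ) → ℝ := fun i => if i = ![0, 1] then u else 1

/-- The endpoint of a walk of `n` steps of `exampleSteps`, `k` of which go down, `i` of these to the
left. -/
def exampleEndpoint (n k i : ℕ) : Fin 2 → ℤ := ![k - 2 * i, n - 2 * k]

lemma exampleEndpoint_nonneg_iff {n k i : ℕ} :
    0 ≤ exampleEndpoint n k i ↔ 2 * i ≤ k ∧ 2 * k ≤ n := by
  simp only [exampleEndpoint, Pi.le_def, Fin.forall_fin_two, Pi.zero_apply, Matrix.cons_val_zero,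
    Matrix.cons_val_one]
  omega

lemma exampleEndpoint_add_up (n k i : ℕ) :
    exampleEndpoint n k i + ![0, 1] = exampleEndpoint (n + 1) k i := by
  simp only [exampleEndpoint, Matrix.cons_add_cons, Matrix.empty_add_empty, Nat.cast_add_one]
  ring_nf

lemma exampleEndpoint_add_down_right (n k i : ℕ) :
    exampleEndpoint n k i + ![1, -1] = exampleEndpoint (n + 1) (k + 1) i := by
  simp only [exampleEndpoint, Matrix.cons_add_cons, Matrix.empty_add_empty, Nat.cast_add_one]
  ring_nf

lemma exampleEndpoint_add_down_left (n k i : ℕ) :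
    exampleEndpoint n k i + ![-1, -1] = exampleEndpoint (n + 1) (k + 1) (i + 1) := by
  simp only [exampleEndpoint, Matrix.cons_add_cons, Matrix.empty_add_empty, Nat.cast_add_one]
  ring_nf

lemma stepOperator_exampleEndpoint (u : ℝ) (φ : (Fin 2 → ℤ) → ℝ) {n k i : ℕ} (hk : 2 * k ≤ n)
    (hi : 2 * i ≤ k) :
    stepOperator exampleSteps (exampleWeight u) φ (exampleEndpoint n k i) =
      u * φ (exampleEndpoint (n + 1) k i) +
        if 2 * k < n then φ (exampleEndpoint (n + 1) (k + 1) i) +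
          if 2 * i < k then φ (exampleEndpoint (n + 1) (k + 1) (i + 1)) else 0
        else 0 := by
  have right_ne_up : (![1, -1] : Fin 2 → ℤ) ≠ ![0, 1] := by decide
  have left_ne_up : (![-1, -1] : Fin 2 → ℤ) ≠ ![0, 1] := by decide
  unfold stepOperator
  rw [sum_insert (by decide), sum_insert (by decide), sum_singleton]
  simp only [exampleEndpoint_add_up, exampleEndpoint_add_down_right, exampleEndpoint_add_down_left,
    exampleEndpoint_nonneg_iff, exampleWeight, right_ne_up, left_ne_up, if_true, if_false, one_mul]
  split_ifs <;> first | omega | simp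

theorem stepOperator_iterate_exampleSteps (u : ℝ) (n : ℕ) (φ : (Fin 2 → ℤ) → ℝ) :
    (stepOperator exampleSteps (exampleWeight u))^[n] φ 0 =
      ballotSum n fun k => u ^ (n - k) * ballotSum k fun i => φ (exampleEndpoint n k i) := by
  induction n generalizing φ with
  | zero => simp [ballotSum, ballotNumber, exampleEndpoint, ← Matrix.zero_empty]
  | succ n ih =>
    rw [Function.iterate_succ_apply, ih, ballotSum_succ]
    refine ballotSum_congr fun k hk => ?_
    rw [ballotSum_congr fun i hi => stepOperator_exampleEndpoint u φ hk hi, ballotSum_add,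
      ← mul_ballotSum, mul_add, ← mul_assoc, ← pow_succ, Nat.add_sub_add_right,
      show n + 1 - k = n - k + 1 by omega]
    split_ifs with hkn
    · rw [← ballotSum_succ]
    · simp [ballotSum]

theorem walkWeight_exampleSteps (u : ℝ) (n : ℕ) :
    walkWeight 2 exampleSteps (exampleWeight u) n =
      ballotSum n fun k => u ^ (n - k) * k.choose (k / 2) := by
  rw [walkWeight_eq_stepOperator_iterate, stepOperator_iterate_exampleSteps]
  simp only [← ballotSum_one]
  rfl

/-! ### The survival probability of the simple random walk -/

/-- The probability `(k.choose (k / 2)) / 2 ^ k` that a simple random walk on `ℤ` started at `0` is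
nonnegative at all times up to `k`. -/
def survivalProb (k : ℕ) : ℝ := k.choose (k / 2) / 2 ^ k

lemma survivalProb_pos (k : ℕ) : 0 < survivalProb k :=
  div_pos (mod_cast Nat.choose_pos (Nat.div_le_self k 2)) (by positivity)

lemma survivalProb_two_mul (m : ℕ) : survivalProb (2 * m) = m.centralBinom / 4 ^ m := by
  rw [survivalProb, Nat.mul_div_cancel_left m two_pos, Nat.centralBinom, pow_mul]
  norm_num

lemma survivalProb_two_mul_add_one (m : ℕ) :
    survivalProb (2 * m + 1) = survivalProb (2 * (m + 1)) := by
  have half_odd : (2 * m + 1) / 2 = m := by omega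
  have half_even : 2 * (m + 1) / 2 = m + 1 := by omega
  rw [survivalProb, survivalProb, half_odd, half_even, show 2 * (m + 1) = 2 * m + 1 + 1 by ring,
    Nat.choose_succ_succ' (2 * m + 1) m, Nat.choose_symm_half, pow_succ _ (2 * m + 1)]
  push_cast
  field_simp
  ring

lemma survivalProb_sub_succ (k : ℕ) :
    survivalProb k - survivalProb (k + 1) = if Even k then survivalProb k / (k + 2) else 0 := by
  rcases Nat.even_or_odd' k with ⟨m, rfl | rfl⟩
  · have ratio : ((m : ℝ) + 1) * (m + 1).centralBinom = 2 * (2 * m + 1) * m.centralBinom :=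
      mod_cast Nat.succ_mul_centralBinom_succ m
    rw [if_pos (even_two_mul m), survivalProb_two_mul_add_one, survivalProb_two_mul,
      survivalProb_two_mul, pow_succ]
    push_cast
    field_simp
    linear_combination -2 * ratio
  · rw [if_neg (Nat.not_even_two_mul_add_one m), survivalProb_two_mul_add_one,
      show 2 * m + 1 + 1 = 2 * (m + 1) by ring, sub_self]

lemma survivalProb_two_mul_sq_mul_wallis (m : ℕ) :
    survivalProb (2 * m) ^ 2 * (Real.Wallis.W m * (2 * m + 1)) = 1 := by
  have factorials : (m.centralBinom : ℝ) * m.factorial * m.factorial = (2 * m).factorial := by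
    have := Nat.choose_mul_factorial_mul_factorial (show m ≤ 2 * m by omega)
    rw [show 2 * m - m = m by omega] at this
    exact_mod_cast this
  have powers : (2 : ℝ) ^ (4 * m) = (4 ^ m) ^ 2 := by
    rw [← pow_mul, mul_comm m 2, pow_mul 2 4, pow_mul 4 2]; norm_num
  have factorial_ne : (m.factorial : ℝ) ≠ 0 := by positivity
  have centralBinom_ne : (m.centralBinom : ℝ) ≠ 0 := mod_cast Nat.centralBinom_ne_zero m
  rw [survivalProb_two_mul, Real.Wallis.W_eq_factorial_ratio, ← factorials, powers]
  field_simp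

lemma two_div_pi_le_survivalProb_two_mul_sq_mul (m : ℕ) :
    2 / π ≤ survivalProb (2 * m) ^ 2 * (2 * m + 1) := by
  rw [div_le_iff₀ Real.pi_pos]
  calc (2 : ℝ) = 2 * (survivalProb (2 * m) ^ 2 * (Real.Wallis.W m * (2 * m + 1))) := by
        rw [survivalProb_two_mul_sq_mul_wallis, mul_one]
    _ ≤ 2 * (survivalProb (2 * m) ^ 2 * (π / 2 * (2 * m + 1))) := by
        gcongr; exact Real.Wallis.W_le m
    _ = survivalProb (2 * m) ^ 2 * (2 * m + 1) * π := by ring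

lemma survivalProb_two_mul_sq_mul_le (m : ℕ) : survivalProb (2 * m) ^ 2 * (2 * m) ≤ 2 / π := by
  rw [le_div_iff₀ Real.pi_pos]
  calc survivalProb (2 * m) ^ 2 * (2 * m) * π
      ≤ 2 * (survivalProb (2 * m) ^ 2 *
          (((2 : ℝ) * m + 1) / (2 * m + 2) * (π / 2) * (2 * m + 1))) := by
        have : (2 : ℝ) * m ≤ (2 * m + 1) ^ 2 / (2 * m + 2) := by
          rw [le_div_iff₀ (by positivity)]; nlinarith
        calc _ = survivalProb (2 * m) ^ 2 * π * (2 * m) := by ring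
          _ ≤ survivalProb (2 * m) ^ 2 * π * ((2 * m + 1) ^ 2 / (2 * m + 2)) := by gcongr
          _ = _ := by ring
    _ ≤ 2 * (survivalProb (2 * m) ^ 2 * (Real.Wallis.W m * (2 * m + 1))) := by
        gcongr; exact Real.Wallis.le_W m
    _ = 2 := by rw [survivalProb_two_mul_sq_mul_wallis, mul_one]

theorem two_div_pi_le_survivalProb_sq_mul (k : ℕ) : 2 / π ≤ survivalProb k ^ 2 * (k + 2) := by
  rcases Nat.even_or_odd' k with ⟨m, rfl | rfl⟩
  · refine (two_div_pi_le_survivalProb_two_mul_sq_mul m).trans ?_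
    push_cast
    gcongr
    norm_num
  · rw [survivalProb_two_mul_add_one]
    refine (two_div_pi_le_survivalProb_two_mul_sq_mul (m + 1)).trans_eq ?_
    push_cast
    ring

theorem survivalProb_sq_mul_le (k : ℕ) : survivalProb k ^ 2 * k ≤ 2 / π := by
  rcases Nat.even_or_odd' k with ⟨m, rfl | rfl⟩
  · exact_mod_cast survivalProb_two_mul_sq_mul_le m
  · rw [survivalProb_two_mul_add_one]
    refine le_trans ?_ (survivalProb_two_mul_sq_mul_le (m + 1))
    push_cast
    gcongr
    linarith

lemma survivalProb_le_inv_sqrt {n : ℕ} (hn : 0 < n) : survivalProb n ≤ (√n)⁻¹ := by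
  have hn' : (0 : ℝ) < n := mod_cast hn
  rw [← Real.sqrt_inv]
  refine Real.le_sqrt_of_sq_le ?_
  rw [le_inv_comm₀ (by have := survivalProb_pos n; positivity) hn', ← one_div,
    le_div_iff₀ (by have := survivalProb_pos n; positivity), mul_comm]
  exact (survivalProb_sq_mul_le n).trans ((div_le_one Real.pi_pos).2 Real.two_le_pi)

lemma choose_le_two_pow_mul_survivalProb (n k : ℕ) : (n.choose k : ℝ) ≤ 2 ^ n * survivalProb n := by
  rw [survivalProb, mul_div_cancel₀ _ (by positivity)]
  exact_mod_cast Nat.choose_le_middle k n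

theorem walkWeight_exampleSteps_two (n : ℕ) :
    walkWeight 2 exampleSteps (exampleWeight 2) n =
      4 ^ n * (survivalProb (n / 2) * survivalProb n +
        ∑ k ∈ range (n / 2), (survivalProb k - survivalProb (k + 1)) * (n.choose k / 2 ^ n)) := by
  have weight_eq (k : ℕ) (hk : 2 * k ≤ n) :
      (2 : ℝ) ^ (n - k) * k.choose (k / 2) = 2 ^ n * survivalProb k := by
    rw [survivalProb, ← Nat.sub_add_cancel (show k ≤ n by omega), pow_add, Nat.add_sub_cancel]
    field_simp
  have four_pow : (4 : ℝ) ^ n = 2 ^ n * 2 ^ n := by rw [← mul_pow]; norm_num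
  rw [walkWeight_exampleSteps, ballotSum_congr weight_eq, ← mul_ballotSum, ballotSum,
    sum_range_ballotNumber_mul, four_pow, survivalProb.eq_def n]
  simp only [← mul_div_assoc, ← sum_div]
  field_simp

/-! ### Partial binomial sums -/

theorem sum_range_choose_mul_sub_two_mul (r m : ℕ) :
    ∑ j ∈ range m, (r.choose j : ℝ) * (r - 2 * j) = m * r.choose m := by
  induction m with
  | zero => simp
  | succ m ih =>
    have ratio : (r.choose (m + 1) : ℝ) * (m + 1) = r.choose m * (r - m) := by
      rcases le_or_gt m r with hm | hm
      · rw [← Nat.cast_sub hm]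
        exact_mod_cast Nat.choose_succ_right_eq r m
      · simp [Nat.choose_eq_zero_of_lt hm, Nat.choose_eq_zero_of_lt (Nat.lt_succ_of_lt hm)]
    rw [sum_range_succ, ih]
    push_cast
    linear_combination -ratio

lemma sum_range_choose_le_two_pow {n m : ℕ} (hm : m ≤ n + 1) :
    ∑ k ∈ range m, (n.choose k : ℝ) ≤ 2 ^ n := by
  have full : ∑ k ∈ range (n + 1), (n.choose k : ℝ) = 2 ^ n := mod_cast Nat.sum_range_choose n
  rw [← full]
  exact sum_le_sum_of_subset_of_nonneg (range_mono hm) fun _ _ _ => by positivity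

lemma sum_range_succ_choose_succ (n m : ℕ) :
    ∑ k ∈ range (m + 1), (n + 1).choose k =
      2 * ∑ k ∈ range m, n.choose k + n.choose m := by
  have shifted : ∑ k ∈ range m, n.choose (k + 1) + 1 = ∑ k ∈ range m, n.choose k + n.choose m := by
    rw [← sum_range_succ, sum_range_succ', Nat.choose_zero_right]
  rw [sum_range_succ', sum_congr rfl fun k _ => Nat.choose_succ_succ' n k, sum_add_distrib,
    Nat.choose_zero_right, add_assoc, shifted]
  ring

lemma abs_sum_range_half_choose_sub_le (n : ℕ) :
    |∑ k ∈ range (n / 2), (n.choose k : ℝ) - 2 ^ n / 2| ≤ n.choose (n / 2) := by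
  rcases Nat.even_or_odd' n with ⟨m, rfl | rfl⟩
  · have halfway : 2 * ∑ k ∈ range m, ((2 * m).choose k : ℝ) + (2 * m).choose m = 2 ^ (2 * m) := by
      rw [pow_mul, show (2 : ℝ) ^ 2 = 4 by norm_num]
      exact_mod_cast sum_range_succ_choose_succ (2 * m) m ▸ Nat.sum_range_choose_halfway m
    rw [Nat.mul_div_cancel_left m two_pos, ← halfway, abs_le]
    constructor <;> linarith [((2 * m).choose m).cast_nonneg (α := ℝ)]
  · have halfway : ∑ k ∈ range m, ((2 * m + 1).choose k : ℝ) + (2 * m + 1).choose m =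
        2 ^ (2 * m + 1) / 2 := by
      rw [← sum_range_succ, pow_succ, pow_mul, mul_div_cancel_right₀ _ two_ne_zero,
        show (2 : ℝ) ^ 2 = 4 by norm_num]
      exact_mod_cast Nat.sum_range_choose_halfway m
    rw [show (2 * m + 1) / 2 = m by omega, ← halfway, sub_add_cancel_left, abs_neg, Nat.abs_cast]

lemma abs_sum_range_neg_one_pow_mul_choose_le (n m : ℕ) :
    |∑ k ∈ range m, (-1 : ℝ) ^ k * n.choose k| ≤ n.choose (n / 2) := by
  rcases n with _ | n
  · rcases m with _ | m <;> simp [sum_range_succ']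
  rcases m with _ | m
  · simp
  have partial_sum : ∑ k ∈ range (m + 1), (-1 : ℝ) ^ k * (n + 1).choose k =
      (-1) ^ m * n.choose m :=
    mod_cast Int.alternating_sum_range_choose_eq_choose
  rw [partial_sum, abs_mul, abs_neg_one_pow, one_mul, Nat.abs_cast]
  exact_mod_cast (Nat.choose_le_succ n m).trans (Nat.choose_le_middle m (n + 1))

/-- Since the alternating sum is small, the even `k` below `n / 2` carry half of the binomial weight
there, that is, a quarter of the total. -/
theorem abs_sum_range_half_even_choose_sub_le (n : ℕ) :
    |∑ k ∈ range (n / 2), (if Even k then (n.choose k : ℝ) else 0) - 2 ^ n / 4| ≤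
      n.choose (n / 2) := by
  have even_part : ∑ k ∈ range (n / 2), (if Even k then (n.choose k : ℝ) else 0) =
      (∑ k ∈ range (n / 2), (n.choose k : ℝ) +
        ∑ k ∈ range (n / 2), (-1 : ℝ) ^ k * n.choose k) / 2 := by
    rw [← sum_add_distrib, sum_div]
    refine sum_congr rfl fun k _ => ?_
    split_ifs with hk
    · rw [hk.neg_one_pow]; ring
    · rw [(Nat.not_even_iff_odd.1 hk).neg_one_pow]; ring
  have half := abs_le.1 (abs_sum_range_half_choose_sub_le n)
  have alternating := abs_le.1 (abs_sum_range_neg_one_pow_mul_choose_le n (n / 2))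
  rw [even_part, abs_le]
  constructor <;> linarith

lemma add_two_mul_choose_add_two_le (n m : ℕ) :
    ((m : ℝ) + 2) * (n + 2).choose (m + 2) ≤ (n + 2) * (2 ^ (n + 1) * survivalProb (n + 1)) := by
  have absorb : ((m : ℝ) + 2) * (n + 2).choose (m + 2) = (n + 2) * (n + 1).choose (m + 1) := by
    have := Nat.add_one_mul_choose_eq (n + 1) (m + 1)
    rw [mul_comm ((m : ℝ) + 2)]
    exact_mod_cast this.symm
  rw [absorb]
  gcongr
  exact choose_le_two_pow_mul_survivalProb (n + 1) (m + 1)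

lemma choose_mul_div_sq_le (n k : ℕ) :
    (n.choose k : ℝ) / (k + 1) ^ 2 ≤ 2 / ((n + 1) * (n + 2)) * (n + 2).choose (k + 2) := by
  have absorb : ((n : ℝ) + 1) * (n + 2) * n.choose k =
      (n + 2).choose (k + 2) * ((k + 1) * (k + 2)) := by
    have outer : ((n : ℝ) + 2) * (n + 1).choose (k + 1) = (n + 2).choose (k + 2) * (k + 2) :=
      mod_cast Nat.add_one_mul_choose_eq (n + 1) (k + 1)
    have inner : ((n : ℝ) + 1) * n.choose k = (n + 1).choose (k + 1) * (k + 1) :=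
      mod_cast Nat.add_one_mul_choose_eq n k
    linear_combination (k + 1 : ℝ) * outer + (n + 2 : ℝ) * inner
  rw [div_mul_eq_mul_div, div_le_div_iff₀ (by positivity) (by positivity)]
  calc (n.choose k : ℝ) * ((n + 1) * (n + 2))
      = (n + 2).choose (k + 2) * ((k + 1) * (k + 2)) := by rw [← absorb]; ring
    _ ≤ (n + 2).choose (k + 2) * (2 * (k + 1) ^ 2) := by
        refine mul_le_mul_of_nonneg_left ?_ (Nat.cast_nonneg _)
        nlinarith [k.cast_nonneg (α := ℝ)]
    _ = 2 * (n + 2).choose (k + 2) * (k + 1) ^ 2 := by ring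

lemma sum_range_half_choose_add_two_mul_le (n : ℕ) :
    ∑ k ∈ range (n / 2), ((n + 2).choose (k + 2) : ℝ) * (n - 2 * k) ≤
      (n + 2) * (2 ^ (n + 1) * survivalProb (n + 1)) + 2 * 2 ^ (n + 2) := by
  have split (j : ℕ) : ((n + 2).choose j : ℝ) * (n + 4 - 2 * j) =
      (n + 2).choose j * ((n + 2 : ℕ) - 2 * j) + 2 * (n + 2).choose j := by
    push_cast; ring
  calc ∑ k ∈ range (n / 2), ((n + 2).choose (k + 2) : ℝ) * (n - 2 * k)
      ≤ ∑ j ∈ range (n / 2 + 2), ((n + 2).choose j : ℝ) * (n + 4 - 2 * j) := by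
        rw [sum_range_succ', sum_range_succ']
        have first_terms : 0 ≤ ((n + 2).choose 1 : ℝ) * (n + 4 - 2 * 1) +
            (n + 2).choose 0 * (n + 4 - 2 * 0) :=
          add_nonneg (mul_nonneg (by positivity) (by linarith [n.cast_nonneg (α := ℝ)]))
            (mul_nonneg (by positivity) (by linarith [n.cast_nonneg (α := ℝ)]))
        have shifted (k : ℕ) : (n : ℝ) - 2 * k = n + 4 - 2 * (k + 1 + 1 : ℕ) := by
          push_cast; ring
        simp only [shifted, add_assoc]
        simpa using first_terms
    _ = (n / 2 + 2 : ℕ) * (n + 2).choose (n / 2 + 2) +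
          2 * ∑ j ∈ range (n / 2 + 2), ((n + 2).choose j : ℝ) := by
        rw [sum_congr rfl fun j _ => split j, sum_add_distrib, sum_range_choose_mul_sub_two_mul,
          mul_sum]
    _ ≤ (n + 2) * (2 ^ (n + 1) * survivalProb (n + 1)) + 2 * 2 ^ (n + 2) := by
        refine add_le_add ?_ (mul_le_mul_of_nonneg_left ?_ zero_le_two)
        · exact_mod_cast add_two_mul_choose_add_two_le n (n / 2)
        · exact sum_range_choose_le_two_pow (by omega)

/-- Dividing by `(k + 1) ^ 2` turns the row `n` of Pascal's triangle into the row `n + 2`, where the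
sum of the deviations `n - 2 * k` telescopes. -/
theorem sum_range_half_choose_mul_deviation_div_sq_le {n : ℕ} (hn : 0 < n) :
    ∑ k ∈ range (n / 2), (n.choose k : ℝ) / 2 ^ n * ((n - 2 * k) / (k + 1) ^ 2) ≤
      20 / (n * √n) := by
  have hn' : (1 : ℝ) ≤ n := mod_cast hn
  have sqrt_le : √n ≤ n := Real.sqrt_le_self_iff.2 (.inr hn')
  have survival_le : survivalProb (n + 1) ≤ (√n)⁻¹ :=
    (survivalProb_le_inv_sqrt n.succ_pos).trans (by gcongr; linarith)
  calc ∑ k ∈ range (n / 2), (n.choose k : ℝ) / 2 ^ n * ((n - 2 * k) / (k + 1) ^ 2)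
      ≤ ∑ k ∈ range (n / 2), (2 : ℝ) / ((n + 1) * (n + 2)) / 2 ^ n *
          ((n + 2).choose (k + 2) * (n - 2 * k)) := by
        refine sum_le_sum fun k hk => ?_
        have deviation_nonneg : (0 : ℝ) ≤ n - 2 * k := by
          rw [sub_nonneg]; exact_mod_cast (by grind : 2 * k ≤ n)
        calc _ = (n.choose k : ℝ) / (k + 1) ^ 2 * (n - 2 * k) / 2 ^ n := by ring
          _ ≤ 2 / ((n + 1) * (n + 2)) * (n + 2).choose (k + 2) * (n - 2 * k) / 2 ^ n := by
            gcongr; exact choose_mul_div_sq_le n k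
          _ = _ := by ring
    _ ≤ 2 / ((n + 1) * (n + 2)) / 2 ^ n *
          ((n + 2) * (2 ^ (n + 1) * survivalProb (n + 1)) + 2 * 2 ^ (n + 2)) := by
        rw [← mul_sum]
        gcongr
        exact sum_range_half_choose_add_two_mul_le n
    _ = 4 / (n + 1) * survivalProb (n + 1) + 16 / ((n + 1) * (n + 2)) := by
        rw [pow_succ, pow_succ]
        field_simp
        ring
    _ ≤ 4 / n * (√n)⁻¹ + 16 / (n * √n) := by
        have := survivalProb_pos (n + 1)
        gcongr <;> linarith
    _ = 20 / (n * √n) := by ring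

/-! ### Comparison with the limiting values -/

lemma abs_sub_le_of_sq_mul_cube_le {b g x N : ℝ} (hb : 0 ≤ b) (hg : 0 ≤ g) (hx : 0 < x)
    (hxN : x ≤ N) (upper : g ^ 2 * x ^ 3 ≤ b ^ 2 * N ^ 3)
    (lower : b ^ 2 * N ^ 3 ≤ g ^ 2 * (x + 1) ^ 3) :
    |g - b| ≤ 2 * b * N * (N - x + 1) / x ^ 2 := by
  have hN : 0 < N := hx.trans_le hxN
  have g_le : g * x ^ 2 ≤ b * N ^ 2 := by
    refine le_of_sq_le_sq ?_ (by positivity)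
    calc (g * x ^ 2) ^ 2 = g ^ 2 * x ^ 3 * x := by ring
      _ ≤ b ^ 2 * N ^ 3 * N := by gcongr
      _ = (b * N ^ 2) ^ 2 := by ring
  have le_g : b * x ^ 2 ≤ g * (x + 1) ^ 2 := by
    refine le_of_sq_le_sq ?_ (by positivity)
    calc (b * x ^ 2) ^ 2 = b ^ 2 * x ^ 3 * x := by ring
      _ ≤ b ^ 2 * N ^ 3 * (x + 1) := by gcongr; linarith
      _ ≤ g ^ 2 * (x + 1) ^ 3 * (x + 1) := by gcongr
      _ = (g * (x + 1) ^ 2) ^ 2 := by ring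
  rw [abs_le, neg_le, neg_sub]
  constructor
  · calc b - g ≤ b * (2 * x + 1) / (x + 1) ^ 2 := by
          rw [le_div_iff₀ (by positivity)]; linarith
      _ ≤ 2 * b * N * 1 / x ^ 2 := by
          rw [div_le_div_iff₀ (by positivity) (by positivity)]
          have : (2 * x + 1) * x ^ 2 ≤ 2 * N * (x + 1) ^ 2 := by
            calc (2 * x + 1) * x ^ 2 ≤ 2 * x * (x + 1) ^ 2 := by nlinarith [pow_pos hx 2]
              _ ≤ _ := by gcongr
          linarith [mul_le_mul_of_nonneg_left this hb]
      _ ≤ _ := by gcongr; linarith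
  · calc g - b ≤ b * (N ^ 2 - x ^ 2) / x ^ 2 := by
          rw [le_div_iff₀ (by positivity)]; linarith
      _ ≤ _ := by
          refine div_le_div_of_nonneg_right ?_ (by positivity)
          have : N ^ 2 - x ^ 2 ≤ 2 * N * (N - x + 1) := by nlinarith [sq_nonneg (N - x)]
          linarith [mul_le_mul_of_nonneg_left this hb]

lemma two_div_pi_le_survivalProb_div_sq_mul (k : ℕ) :
    2 / π ≤ (survivalProb k / (k + 2)) ^ 2 * ((k : ℝ) + 2) ^ 3 := by
  refine (two_div_pi_le_survivalProb_sq_mul k).trans_eq ?_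
  field_simp

lemma survivalProb_div_sq_mul_le (k : ℕ) :
    (survivalProb k / (k + 2)) ^ 2 * ((k : ℝ) + 1) ^ 3 ≤ 2 / π := by
  rcases Nat.eq_zero_or_pos k with rfl | hk
  · have quarter_le : 1 / 4 ≤ 2 / π := by
      rw [div_le_div_iff₀ four_pos Real.pi_pos]; linarith [Real.pi_le_four]
    exact le_trans (by norm_num [survivalProb]) quarter_le
  · have hk' : (1 : ℝ) ≤ k := mod_cast hk
    refine le_trans ?_ (survivalProb_sq_mul_le k)
    rw [div_pow, div_mul_eq_mul_div, div_le_iff₀ (by positivity), mul_assoc]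
    gcongr
    nlinarith

/-- The value near `k = n / 2` of the decrements `survivalProb k / (k + 2)` of the survival
probability at even `k`. -/
def centralDecrement (n : ℕ) : ℝ := 4 / (√π * (n * √n))

lemma centralDecrement_sq_mul {n : ℕ} (hn : 0 < n) :
    centralDecrement n ^ 2 * ((n : ℝ) / 2) ^ 3 = 2 / π := by
  have hn' : (0 : ℝ) < n := mod_cast hn
  rw [centralDecrement, div_pow, mul_pow, mul_pow, Real.sq_sqrt Real.pi_nonneg,
    Real.sq_sqrt hn'.le]
  field_simp
  norm_num

lemma centralDecrement_nonneg (n : ℕ) : 0 ≤ centralDecrement n := by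
  unfold centralDecrement; positivity

lemma centralDecrement_le (n : ℕ) : centralDecrement n ≤ 4 / (n * √n) := by
  have one_le_sqrt_pi : 1 ≤ √π := Real.one_le_sqrt.2 (by linarith [Real.two_le_pi])
  rw [centralDecrement, mul_comm √π, ← div_div]
  exact div_le_self (by positivity) one_le_sqrt_pi

lemma abs_survivalProb_div_sub_centralDecrement_le {n k : ℕ} (hk : k < n / 2) :
    |survivalProb k / (k + 2) - centralDecrement n| ≤
      centralDecrement n * n / 2 * ((n - 2 * k) / (k + 1) ^ 2) := by
  have hn : 0 < n := by omega
  have succ_le_half : (k : ℝ) + 1 ≤ n / 2 := by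
    rw [le_div_iff₀ two_pos]; exact_mod_cast (by omega : (k + 1) * 2 ≤ n)
  have := abs_sub_le_of_sq_mul_cube_le (centralDecrement_nonneg n)
    (div_nonneg (survivalProb_pos k).le (by positivity)) (by positivity) succ_le_half
    ((survivalProb_div_sq_mul_le k).trans_eq (centralDecrement_sq_mul hn).symm)
    ((centralDecrement_sq_mul hn).trans_le
      ((two_div_pi_le_survivalProb_div_sq_mul k).trans_eq (by ring)))
  refine this.trans_eq ?_
  ring

lemma inv_mul_sqrt_mul_inv_sqrt (n : ℕ) : (n * √n)⁻¹ * (√n)⁻¹ = ((n : ℝ) ^ 2)⁻¹ := by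
  rw [← mul_inv, mul_assoc, Real.mul_self_sqrt n.cast_nonneg, sq]

theorem abs_sum_survivalProb_sub_succ_sub_sum_even_le {n : ℕ} (hn : 0 < n) :
    |∑ k ∈ range (n / 2), (survivalProb k - survivalProb (k + 1)) * (n.choose k / 2 ^ n) -
      centralDecrement n * (∑ k ∈ range (n / 2), (if Even k then (n.choose k : ℝ) else 0) / 2 ^ n)|
      ≤ 40 / (n : ℝ) ^ 2 := by
  have cast_ne_zero : (n : ℝ) ≠ 0 := mod_cast hn.ne'
  calc _ ≤ ∑ k ∈ range (n / 2), centralDecrement n * n / 2 *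
        ((n.choose k : ℝ) / 2 ^ n * ((n - 2 * k) / (k + 1) ^ 2)) := by
        rw [mul_sum, ← sum_sub_distrib]
        refine (abs_sum_le_sum_abs _ _).trans (sum_le_sum fun k hk => ?_)
        have pointwise := abs_survivalProb_div_sub_centralDecrement_le (mem_range.1 hk)
        rw [survivalProb_sub_succ]
        split_ifs
        · rw [← sub_mul, abs_mul, abs_of_nonneg (a := (n.choose k : ℝ) / 2 ^ n) (by positivity)]
          exact (mul_le_mul_of_nonneg_right pointwise (by positivity)).trans_eq (by ring)
        · rw [zero_mul, zero_div, mul_zero, sub_zero, abs_zero]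
          exact (mul_nonneg ((abs_nonneg _).trans pointwise)
            (by positivity : (0 : ℝ) ≤ n.choose k / 2 ^ n)).trans_eq (by ring)
    _ ≤ centralDecrement n * n / 2 * (20 / (n * √n)) := by
        rw [← mul_sum]
        have := centralDecrement_nonneg n
        gcongr
        exact sum_range_half_choose_mul_deviation_div_sq_le hn
    _ ≤ 4 / (n * √n) * n / 2 * (20 / (n * √n)) := by
        gcongr; exact centralDecrement_le n
    _ = 40 * ((n * √n)⁻¹ * (√n)⁻¹) := by field_simp [cast_ne_zero]; norm_num
    _ = 40 / (n : ℝ) ^ 2 := by rw [inv_mul_sqrt_mul_inv_sqrt, div_eq_mul_inv]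

theorem abs_sum_survivalProb_sub_succ_sub_centralDecrement_div_le {n : ℕ} (hn : 0 < n) :
    |∑ k ∈ range (n / 2), (survivalProb k - survivalProb (k + 1)) * (n.choose k / 2 ^ n) -
      centralDecrement n / 4| ≤ 44 / (n : ℝ) ^ 2 := by
  have quarter : |∑ k ∈ range (n / 2), (if Even k then (n.choose k : ℝ) else 0) / 2 ^ n - 1 / 4| ≤
      (√n)⁻¹ := by
    calc _ = |∑ k ∈ range (n / 2), (if Even k then (n.choose k : ℝ) else 0) - 2 ^ n / 4| /
          2 ^ n := by
          rw [← sum_div, ← abs_of_pos (by positivity : (0 : ℝ) < 2 ^ n), ← abs_div,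
            abs_of_pos (by positivity : (0 : ℝ) < 2 ^ n)]
          congr 1
          field_simp
      _ ≤ survivalProb n := by
          unfold survivalProb; gcongr; exact abs_sum_range_half_even_choose_sub_le n
      _ ≤ (√n)⁻¹ := survivalProb_le_inv_sqrt hn
  have replaced_mass : |centralDecrement n *
        (∑ k ∈ range (n / 2), (if Even k then (n.choose k : ℝ) else 0) / 2 ^ n) -
      centralDecrement n / 4| ≤ 4 / (n : ℝ) ^ 2 := by
    calc _ = centralDecrement n *
          |∑ k ∈ range (n / 2), (if Even k then (n.choose k : ℝ) else 0) / 2 ^ n - 1 / 4| := by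
          rw [← mul_one_div _ (4 : ℝ), ← mul_sub, abs_mul,
            abs_of_nonneg (centralDecrement_nonneg n)]
      _ ≤ 4 / (n * √n) * (√n)⁻¹ := by gcongr; exact centralDecrement_le n
      _ = 4 / (n : ℝ) ^ 2 := by
          rw [div_eq_mul_inv, mul_assoc, inv_mul_sqrt_mul_inv_sqrt, div_eq_mul_inv]
  calc _ ≤ 40 / (n : ℝ) ^ 2 + 4 / (n : ℝ) ^ 2 :=
        (abs_sub_le _ _ _).trans
          (add_le_add (abs_sum_survivalProb_sub_succ_sub_sum_even_le hn) replaced_mass)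
    _ = 44 / (n : ℝ) ^ 2 := by ring

lemma two_sqrt_two_div_pi_sq : (2 * √2 / π) ^ 2 = 2 * (2 / π) ^ 2 := by
  rw [div_pow, mul_pow, Real.sq_sqrt zero_le_two]
  ring

lemma survivalProb_half_mul_survivalProb_mul_le (n : ℕ) :
    survivalProb (n / 2) * survivalProb n * (n - 1) ≤ 2 * √2 / π := by
  rcases Nat.eq_zero_or_pos n with rfl | hn
  · exact le_trans (by norm_num [survivalProb]) (by positivity : 0 ≤ 2 * √2 / π)
  have hn' : (1 : ℝ) ≤ n := mod_cast hn
  have le_half : (n : ℝ) - 1 ≤ 2 * (n / 2 : ℕ) := by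
    rw [sub_le_iff_le_add]; exact_mod_cast (by omega : n ≤ 2 * (n / 2) + 1)
  refine le_of_sq_le_sq ?_ (by positivity)
  calc (survivalProb (n / 2) * survivalProb n * (n - 1)) ^ 2
      = survivalProb (n / 2) ^ 2 * survivalProb n ^ 2 * ((n - 1) * (n - 1)) := by ring
    _ ≤ survivalProb (n / 2) ^ 2 * survivalProb n ^ 2 * (2 * (n / 2 : ℕ) * n) := by
        gcongr; linarith
    _ = 2 * ((survivalProb (n / 2) ^ 2 * (n / 2 : ℕ)) * (survivalProb n ^ 2 * n)) := by ring
    _ ≤ 2 * (2 / π * (2 / π)) := by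
        gcongr <;> exact survivalProb_sq_mul_le _
    _ = (2 * √2 / π) ^ 2 := by rw [two_sqrt_two_div_pi_sq, sq]

lemma le_survivalProb_half_mul_survivalProb_mul (n : ℕ) :
    2 * √2 / π ≤ survivalProb (n / 2) * survivalProb n * (n + 4) := by
  have half_le : 2 * ((n / 2 : ℕ) : ℝ) ≤ n := mod_cast Nat.mul_div_le n 2
  have := survivalProb_pos n
  have := survivalProb_pos (n / 2)
  refine le_of_sq_le_sq ?_ (by positivity)
  calc (2 * √2 / π) ^ 2 = 2 * (2 / π * (2 / π)) := by rw [two_sqrt_two_div_pi_sq, sq]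
    _ ≤ 2 * ((survivalProb (n / 2) ^ 2 * ((n / 2 : ℕ) + 2)) * (survivalProb n ^ 2 * (n + 2))) := by
        gcongr <;> exact two_div_pi_le_survivalProb_sq_mul _
    _ = survivalProb (n / 2) ^ 2 * survivalProb n ^ 2 * ((2 * (n / 2 : ℕ) + 4) * (n + 2)) := by
        ring
    _ ≤ survivalProb (n / 2) ^ 2 * survivalProb n ^ 2 * ((n + 4) * (n + 4)) := by
        gcongr; linarith
    _ = (survivalProb (n / 2) * survivalProb n * (n + 4)) ^ 2 := by ring

theorem abs_survivalProb_half_mul_survivalProb_sub_le {n : ℕ} (hn : 2 ≤ n) :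
    |survivalProb (n / 2) * survivalProb n - 2 * √2 / π / n| ≤ 8 / (n : ℝ) ^ 2 := by
  have hn' : (2 : ℝ) ≤ n := mod_cast hn
  have upper := survivalProb_half_mul_survivalProb_mul_le n
  have lower := le_survivalProb_half_mul_survivalProb_mul n
  have product_pos := mul_pos (survivalProb_pos (n / 2)) (survivalProb_pos n)
  set P := survivalProb (n / 2) * survivalProb n
  have limit_le : 2 * √2 / π ≤ 1 := by
    have : √2 ≤ 3 / 2 := Real.sqrt_le_iff.2 ⟨by norm_num, by norm_num⟩
    rw [div_le_one Real.pi_pos]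
    linarith [Real.pi_gt_three]
  have product_le : P ≤ 2 / n := by
    rw [le_div_iff₀ (by positivity)]; nlinarith
  calc |P - 2 * √2 / π / n| = |P * n - 2 * √2 / π| / n := by
        rw [eq_div_iff (by positivity), ← abs_of_nonneg (n.cast_nonneg (α := ℝ)), ← abs_mul,
          abs_of_nonneg (n.cast_nonneg (α := ℝ)), sub_mul, div_mul_cancel₀ _ (by positivity)]
    _ ≤ 4 * P / n := by
        gcongr
        rw [abs_le]
        constructor <;> linarith
    _ ≤ 4 * (2 / n) / n := by gcongr
    _ = 8 / (n : ℝ) ^ 2 := by ring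

lemma tendsto_div_nhds_one_of_abs_sub_le {α : Type*} {l : Filter α} {s a r ε : α → ℝ} {q : ℝ}
    (hq : q ≠ 0) (ha : ∀ᶠ x in l, 0 < a x) (hr : Tendsto r l (nhds 0)) (hε : Tendsto ε l (nhds 0))
    (hs : ∀ᶠ x in l, |s x - a x * (q + r x)| ≤ a x * ε x) :
    Tendsto (fun x => s x / (q * a x)) l (nhds 1) := by
  have remainder : Tendsto (fun x => s x / a x - (q + r x)) l (nhds 0) := by
    refine squeeze_zero_norm' ?_ hε
    filter_upwards [ha, hs] with x ha hs
    rwa [Real.norm_eq_abs, div_sub' ha.ne', abs_div, abs_of_pos ha, div_le_iff₀' ha]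
  have ratio : Tendsto (fun x => s x / a x) l (nhds q) := by
    simpa using remainder.add (hr.const_add q)
  simpa only [div_div, mul_comm q, div_self hq] using ratio.div_const q

theorem abs_walkWeight_exampleSteps_sub_le {n : ℕ} (hn : 2 ≤ n) :
    |walkWeight 2 exampleSteps (exampleWeight 2) n -
      4 ^ n / n * (2 * √2 / π + (n : ℝ) ^ (-(1 : ℝ) / 2) / √π)| ≤ 52 * 4 ^ n / (n : ℝ) ^ 2 := by
  have hn' : (0 : ℝ) < n := mod_cast (by omega : 0 < n)
  have half_power : (n : ℝ) ^ (-(1 : ℝ) / 2) = (√n)⁻¹ := by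
    rw [neg_div, Real.rpow_neg hn'.le, ← Real.sqrt_eq_rpow]
  have main_term : 4 ^ n / n * (2 * √2 / π + (n : ℝ) ^ (-(1 : ℝ) / 2) / √π) =
      4 ^ n * (2 * √2 / π / n + centralDecrement n / 4) := by
    rw [half_power, centralDecrement]
    field_simp
  rw [main_term, walkWeight_exampleSteps_two, ← mul_sub, add_sub_add_comm, abs_mul,
    abs_of_pos (by positivity)]
  calc _ ≤ 4 ^ n * (8 / (n : ℝ) ^ 2 + 44 / (n : ℝ) ^ 2) := by
        gcongr
        exact (abs_add_le _ _).trans (add_le_add (abs_survivalProb_half_mul_survivalProb_sub_le hn)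
          (abs_sum_survivalProb_sub_succ_sub_centralDecrement_div_le (by omega)))
    _ = 52 * 4 ^ n / (n : ℝ) ^ 2 := by ring

/-- For the weighted step set `{(0,1), (1,-1), (-1,-1)}` in `ℤ²` with the step `(0,1)`
of weight `2`, the total weight of quarter-plane walks satisfies
`s_n = (4^n/n)(2√2/π + n^{-1/2}/√π + O(1/n))`; in particular `s_n ∼ (2√2/π)·4^n/n`. -/
theorem weighted_zero_drift_example_asymptotics :
    (∃ C : ℝ, ∀ᶠ n : ℕ in atTop,
      |walkWeight 2 ({![0, 1], ![1, -1], ![-1, -1]} : Finset (Fin 2 → ℤ))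
          (fun i => if i = ![0, 1] then 2 else 1) n -
        4 ^ n / n * (2 * Real.sqrt 2 / π + (n : ℝ) ^ (-(1 : ℝ) / 2) / Real.sqrt π)|
        ≤ C * 4 ^ n / (n : ℝ) ^ 2) ∧
    Tendsto (fun n : ℕ =>
      walkWeight 2 ({![0, 1], ![1, -1], ![-1, -1]} : Finset (Fin 2 → ℤ))
          (fun i => if i = ![0, 1] then 2 else 1) n /
        ((2 * Real.sqrt 2 / π) * 4 ^ n / n))
      atTop (nhds 1) := by
  have error_bound : ∀ᶠ n : ℕ in atTop, |walkWeight 2 exampleSteps (exampleWeight 2) n -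
      4 ^ n / n * (2 * √2 / π + (n : ℝ) ^ (-(1 : ℝ) / 2) / √π)| ≤ 52 * 4 ^ n / (n : ℝ) ^ 2 :=
    eventually_atTop.2 ⟨2, fun _ => abs_walkWeight_exampleSteps_sub_le⟩
  have scale_pos : ∀ᶠ n : ℕ in atTop, (0 : ℝ) < 4 ^ n / n := by
    filter_upwards [eventually_gt_atTop 0] with n hn
    positivity
  have correction_tendsto :
      Tendsto (fun n : ℕ => (n : ℝ) ^ (-(1 : ℝ) / 2) / √π) atTop (nhds 0) := by
    simpa [neg_div] using ((tendsto_rpow_neg_atTop (by norm_num : (0 : ℝ) < 1 / 2)).comp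
      tendsto_natCast_atTop_atTop).div_const √π
  refine ⟨⟨52, error_bound⟩, ?_⟩
  simp only [mul_div_assoc (2 * √2 / π)]
  refine tendsto_div_nhds_one_of_abs_sub_le (by positivity) scale_pos correction_tendsto
    (tendsto_const_div_atTop_nhds_zero_nat 52) (error_bound.mono fun n h => h.trans_eq ?_)
  ring

end
end
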